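/- For every real β ≥ 0, every integer n ≥ 0, and every quaternion q ∈ ℍ, the series Σ_{m=n}^{∞} (n!/Γ(β+m+1)) · Z^{(β)}_{m,n}(q,q̄) · conj(Z^{(β)}_{m,n}(q,q̄)) converges in ℍ, and its sum equals the real scalar E_n^{(β)}(|q|²) (times the identity of ℍ), where for x ≥ 0, E_n^{(β)}(x) := ((1+β)_n/(n!·Γ(β+1))) · Σ_{k=0}^{n} Σ_{k'=0}^{n} [(−n)_k (−n)_{k'} / (k!·k'!·(1+β)_k·(1+β)_{k'})] · x^{k+k'} · Σ_{j=0}^{∞} [(β+n+1)_j / ((β+k+1)_j (β+k'+1)_j)] · x^{j}. -/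

import Mathlib

open Finset Quaternion

/-- Pochhammer symbol `(a)_j = a (a+1) ⋯ (a+j-1)`. -/
noncomputable def poch (a : ℝ) (j : ℕ) : ℝ := ∏ i ∈ Finset.range j, (a + i)

/-- The quaternionic 2D Laguerre polynomial `Z^{(β)}_{m,n}(q,q̄)` (for `m ≥ n`). -/
noncomputable def Zq (β : ℝ) (m n : ℕ) (q : ℍ[ℝ]) : ℍ[ℝ] :=
  ∑ k ∈ Finset.range (n + 1),
    ((-1 : ℝ) ^ (n - k) * poch (β + 1) m /
        (k.factorial * (n - k).factorial * poch (β + 1) (m - k))) •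
      (q ^ (m - k) * (star q) ^ (n - k))

/-- The sum `E_n^{(β)}(x)`, expressed via the terminating double sum with inner `₂F₂` series. -/
noncomputable def Efn (β : ℝ) (n : ℕ) (x : ℝ) : ℝ :=
  (poch (1 + β) n / (n.factorial * Real.Gamma (β + 1))) *
    ∑ k ∈ Finset.range (n + 1), ∑ k' ∈ Finset.range (n + 1),
      poch (-(n : ℝ)) k * poch (-(n : ℝ)) k' /
          (k.factorial * k'.factorial * poch (1 + β) k * poch (1 + β) k') *
        x ^ (k + k') *
        ∑' j : ℕ, poch (β + n + 1) j / (poch (β + k + 1) j * poch (β + k' + 1) j) * x ^ j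


lemma poch_succ (a : ℝ) (j : ℕ) : poch a (j+1) = poch a j * (a + j) := by
  simp [poch, Finset.prod_range_succ]

lemma poch_zero (a : ℝ) : poch a 0 = 1 := by simp [poch]

lemma poch_pos (a : ℝ) (ha : 0 < a) (j : ℕ) : 0 < poch a j :=
  Finset.prod_pos (fun i _ => by positivity)

lemma poch_add (a : ℝ) (m j : ℕ) : poch a (m + j) = poch a m * poch (a + m) j := by
  unfold poch
  rw [Finset.prod_range_add]
  congr 1
  apply Finset.prod_congr rfl
  intro i _
  push_cast
  ring

lemma poch_neg (n k : ℕ) (hk : k ≤ n) :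
    poch (-(n : ℝ)) k = (-1) ^ k * n.factorial / (n - k).factorial := by
  induction k with
  | zero =>
    have : (n.factorial : ℝ) ≠ 0 := by positivity
    simp [poch_zero, this]
  | succ k ih =>
    rw [poch_succ, ih (by omega)]
    obtain ⟨d, rfl⟩ := Nat.exists_eq_add_of_le hk
    have h1 : k + 1 + d - k = d + 1 := by omega
    have h2 : k + 1 + d - (k + 1) = d := by omega
    rw [h1, h2, Nat.factorial_succ d]
    have : (d.factorial : ℝ) ≠ 0 := by positivity
    have : (d : ℝ) + 1 ≠ 0 := by positivity
    push_cast
    field_simp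
    ring

lemma gamma_poch (β : ℝ) (hβ : 0 ≤ β) (m : ℕ) :
    Real.Gamma (β + m + 1) = Real.Gamma (β + 1) * poch (β + 1) m := by
  induction m with
  | zero => simp [poch_zero]
  | succ m ih =>
    rw [poch_succ, ← mul_assoc, ← ih]
    have h : β + (m : ℝ) + 1 ≠ 0 := by positivity
    have := Real.Gamma_add_one h
    push_cast
    rw [show β + ((m : ℝ) + 1) + 1 = β + m + 1 + 1 by ring, this]
    ring

lemma ratio_bound (β : ℝ) (hβ : 0 ≤ β) (n k k' j : ℕ) :
    poch (β + n + 1) j / (poch (β + k + 1) j * poch (β + k' + 1) j)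
      ≤ ((n : ℝ) + 1) ^ j / j.factorial := by
  induction j with
  | zero => simp [poch_zero]
  | succ j ih =>
    rw [poch_succ, poch_succ, poch_succ, Nat.factorial_succ]
    have p1 := poch_pos (β + n + 1) (by positivity) j
    have p2 := poch_pos (β + k + 1) (by positivity) j
    have p3 := poch_pos (β + k' + 1) (by positivity) j
    have key : (β + n + 1 + j) / ((β + k + 1 + j) * (β + k' + 1 + j)) ≤ ((n : ℝ) + 1) / (j + 1) := by
      rw [div_le_div_iff₀ (by positivity) (by positivity)]
      have hk : (0:ℝ) ≤ k := by positivity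
      have hk' : (0:ℝ) ≤ k' := by positivity
      have hn : (0:ℝ) ≤ n := by positivity
      have hj : (0:ℝ) ≤ j := by positivity
      rw [← mul_assoc]
      apply mul_le_mul _ (by linarith) (by positivity) (by positivity)
      nlinarith [mul_nonneg hn hβ, mul_nonneg hn hk, mul_nonneg hn hj]
    calc _ = poch (β + n + 1) j / (poch (β + k + 1) j * poch (β + k' + 1) j) *
          ((β + n + 1 + j) / ((β + k + 1 + j) * (β + k' + 1 + j))) := by
            rw [div_mul_div_comm]; congr 1; ring
      _ ≤ ((n : ℝ) + 1) ^ j / j.factorial * (((n : ℝ) + 1) / (j + 1)) := by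
            apply mul_le_mul ih key (by positivity) (by positivity)
      _ = _ := by rw [div_mul_div_comm]; push_cast; congr 1; ring

lemma inner_summable (β : ℝ) (hβ : 0 ≤ β) (n k k' : ℕ) (x : ℝ) (hx : 0 ≤ x) :
    Summable (fun j : ℕ =>
      poch (β + n + 1) j / (poch (β + k + 1) j * poch (β + k' + 1) j) * x ^ j) := by
  refine Summable.of_nonneg_of_le (fun j => ?_) (fun j => ?_)
    (Real.summable_pow_div_factorial (((n : ℝ) + 1) * x))
  · have p1 := poch_pos (β + n + 1) (by positivity) j
    have p2 := poch_pos (β + k + 1) (by positivity) j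
    have p3 := poch_pos (β + k' + 1) (by positivity) j
    positivity
  · calc _ ≤ ((n : ℝ) + 1) ^ j / j.factorial * x ^ j :=
          mul_le_mul_of_nonneg_right (ratio_bound β hβ n k k' j) (by positivity)
      _ = _ := by rw [mul_pow]; ring

lemma Zq_eq (β : ℝ) (n j : ℕ) (q : ℍ[ℝ]) :
    Zq β (n + j) n q = (∑ k ∈ Finset.range (n + 1),
      ((-1 : ℝ) ^ k * poch (β + 1) (n + j) /
        ((n - k).factorial * k.factorial * poch (β + 1) (k + j))) * normSq q ^ k) • q ^ j := by
  unfold Zq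
  rw [← Finset.sum_range_reflect, Finset.sum_smul]
  apply Finset.sum_congr rfl
  intro k hk
  have hk' : k ≤ n := by simpa [Nat.lt_succ_iff] using hk
  have h1 : n + 1 - 1 - k = n - k := by omega
  have h2 : n - (n - k) = k := by omega
  have h3 : n + j - (n - k) = k + j := by omega
  rw [h1, h2, h3, mul_smul]
  congr 1
  have hc : Commute q (star q) := by
    rw [commute_iff_eq, Quaternion.self_mul_star, Quaternion.star_mul_self]
  rw [add_comm, pow_add, mul_assoc, ← hc.mul_pow, Quaternion.self_mul_star,
    ← Quaternion.coe_pow, Quaternion.mul_coe_eq_smul]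

lemma ZZ_eq (β : ℝ) (n j : ℕ) (q : ℍ[ℝ]) :
    Zq β (n + j) n q * star (Zq β (n + j) n q) = ((∑ k ∈ Finset.range (n + 1),
      ((-1 : ℝ) ^ k * poch (β + 1) (n + j) /
        ((n - k).factorial * k.factorial * poch (β + 1) (k + j))) * normSq q ^ k) ^ 2 *
          normSq q ^ j) • (1 : ℍ[ℝ]) := by
  rw [Quaternion.self_mul_star, Zq_eq, Quaternion.normSq_smul, map_pow normSq q j,
    ← Quaternion.coe_mul_eq_smul, mul_one]

/-- Quaternionic summation formula:
`Σ_{m=n}^∞ (n!/Γ(β+m+1)) Z^{(β)}_{m,n}(q,q̄) conj(Z^{(β)}_{m,n}(q,q̄)) = E_n^{(β)}(|q|²) · 1`,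
with the inner hypergeometric series converging for all arguments. -/
theorem laguerre2D_quat_summation (β : ℝ) (hβ : 0 ≤ β) (n : ℕ) (q : ℍ[ℝ]) :
    (∀ k k' : ℕ, Summable (fun j : ℕ =>
      poch (β + n + 1) j / (poch (β + k + 1) j * poch (β + k' + 1) j) *
        Quaternion.normSq q ^ j)) ∧
    HasSum
      (fun j : ℕ =>
        ((n.factorial : ℝ) / Real.Gamma (β + (n + j) + 1)) •
          (Zq β (n + j) n q * star (Zq β (n + j) n q)))
      ((Efn β n (Quaternion.normSq q)) • (1 : ℍ[ℝ])) := by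
  have hs := fun k k' => inner_summable β hβ n k k' (normSq q) Quaternion.normSq_nonneg
  refine ⟨hs, ?_⟩
  have main : HasSum (fun j : ℕ => (poch (1 + β) n / (n.factorial * Real.Gamma (β + 1))) *
    ∑ k ∈ Finset.range (n + 1), ∑ k' ∈ Finset.range (n + 1),
      poch (-(n : ℝ)) k * poch (-(n : ℝ)) k' /
          (k.factorial * k'.factorial * poch (1 + β) k * poch (1 + β) k') *
        normSq q ^ (k + k') *
        (poch (β + n + 1) j / (poch (β + k + 1) j * poch (β + k' + 1) j) * normSq q ^ j))
      (Efn β n (normSq q)) := by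
    unfold Efn
    apply HasSum.mul_left
    apply hasSum_sum
    intro k _
    apply hasSum_sum
    intro k' _
    exact (hs k k').hasSum.mul_left _
  have h2 := main.smul_const (1 : ℍ[ℝ])
  convert h2 using 2 with j
  rw [ZZ_eq, smul_smul]
  congr 1
  have hg := gamma_poch β hβ (n + j)
  push_cast at hg
  rw [hg, sq, Finset.sum_mul_sum, Finset.sum_mul, Finset.mul_sum, Finset.mul_sum]
  apply Finset.sum_congr rfl
  intro k hk
  rw [Finset.sum_mul, Finset.mul_sum, Finset.mul_sum]
  apply Finset.sum_congr rfl
  intro k' hk'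
  have hk1 : k ≤ n := by simpa [Nat.lt_succ_iff] using hk
  have hk1' : k' ≤ n := by simpa [Nat.lt_succ_iff] using hk'
  rw [poch_neg n k hk1, poch_neg n k' hk1', poch_add _ n j, poch_add _ k j, poch_add _ k' j,
    add_right_comm β (n : ℝ) 1, add_right_comm β (k : ℝ) 1, add_right_comm β (k' : ℝ) 1,
    add_comm 1 β]
  have g := (Real.Gamma_pos_of_pos (show 0 < β + 1 by positivity)).ne'
  have p1 := (poch_pos (β + 1) (by positivity) n).ne'
  have p2 := (poch_pos (β + 1) (by positivity) k).ne'
  have p3 := (poch_pos (β + 1) (by positivity) k').ne'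
  have p4 := (poch_pos (β + 1 + n) (by positivity) j).ne'
  have p5 := (poch_pos (β + 1 + k) (by positivity) j).ne'
  have p6 := (poch_pos (β + 1 + k') (by positivity) j).ne'
  have f1 : (n.factorial : ℝ) ≠ 0 := by positivity
  have f2 : (k.factorial : ℝ) ≠ 0 := by positivity
  have f3 : (k'.factorial : ℝ) ≠ 0 := by positivity
  have f4 : ((n - k).factorial : ℝ) ≠ 0 := by positivity
  have f5 : ((n - k').factorial : ℝ) ≠ 0 := by positivity
  rw [pow_add]
  field_simp
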